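/- Let F: S → T be a triangle functor between compactly generated triangulated categories, and assume F has a right adjoint G: T → S. Then the following are equivalent: (i) G preserves coproducts; (ii) G admits a right adjoint H, i.e. there is an adjoint triple (F,G,H); (iii) F preserves compact objects. -/

import Mathlib

/-!
Statement 4 (Neeman, Lemma 3.3): for a triangle functor `F : S ⥤ T` between compactly
generated triangulated categories admitting a right adjoint `G`, TFAE: `G` preserves
coproducts; `G` has a right adjoint (adjoint triple `(F, G, H)`); `F` preserves compact
objects.
-/

namespace LadderFormalization

open CategoryTheory Category Limits Pretriangulated Opposite

universe v u₁ u₂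

variable {S : Type u₁} [Category.{v} S] [HasZeroObject S] [HasShift S ℤ] [Preadditive S]
  [∀ n : ℤ, (shiftFunctor S n).Additive] [Pretriangulated S]
  {T : Type u₂} [Category.{v} T] [HasZeroObject T] [HasShift T ℤ] [Preadditive T]
  [∀ n : ℤ, (shiftFunctor T n).Additive] [Pretriangulated T]

/-- An object `X` is compact if `Hom(X, -)` (as a functor to abelian groups) preserves
all small coproducts. -/
def IsCompactObj {C : Type u₁} [Category.{v} C] [Preadditive C] (X : C) : Prop :=
  ∀ J : Type v, PreservesColimitsOfShape (Discrete J) (preadditiveCoyoneda.obj (op X))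

/-- A functor preserves all small coproducts. -/
def PreservesCoproducts {C : Type u₁} [Category.{v} C] {D : Type u₂} [Category.{v} D]
    (F : C ⥤ D) : Prop :=
  ∀ J : Type v, PreservesColimitsOfShape (Discrete J) F

/-- A pretriangulated category is compactly generated if it has small coproducts and a
set of compact generators. -/
def CompactlyGenerated (C : Type u₁) [Category.{v} C] [Preadditive C]
    [HasShift C ℤ] : Prop :=
  HasCoproducts.{v} C ∧
  ∃ (ι : Type v) (G : ι → C), (∀ i, IsCompactObj (G i)) ∧
    ∀ Y : C, (∀ (i : ι) (n : ℤ) (f : G i ⟶ Y⟦n⟧), f = 0) → IsZero Y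

/-!
For `F ⊣ G` the functors `Hom(F X, -)` and `Hom(X, G -)` agree. Hence `F` preserves compact objects
as soon as `G` preserves coproducts; conversely, if `F` preserves compact objects, then `Hom(c, -)`
inverts `∐ G Yⱼ ⟶ G (∐ Yⱼ)` for every compact `c`, and the compact objects detect isomorphisms.

A coproduct-preserving triangulated functor has a right adjoint by Brown representability: given
`x ∈ H(X)`, one first enlarges `X` so that every element of `H` at the generators is a restriction
of `x`, then repeatedly kills the morphisms from the generators along which `x` vanishes. In the
homotopy colimit, `x` represents `H` on the generators. Such an element is universal since any
extension of it to a larger object can be approximated in the same way, which yields a retraction.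
-/

section Adjunction

variable {C : Type u₁} [Category.{v} C] [Preadditive C] {D : Type u₂} [Category.{v} D]
  [Preadditive D] {F : C ⥤ D} {G : D ⥤ C} [F.Additive]

/-- The additive natural isomorphism `Hom(F X, -) ≅ Hom(X, G -)` of an adjunction `F ⊣ G`. -/
def preadditiveCoyonedaObjIso (adj : F ⊣ G) (X : C) :
    preadditiveCoyoneda.obj (op (F.obj X)) ≅ G ⋙ preadditiveCoyoneda.obj (op X) :=
  NatIso.ofComponents (fun Y => (adj.homAddEquiv X Y).toAddCommGrpIso) fun f => by
    ext g
    exact adj.homEquiv_naturality_right g f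

lemma IsCompactObj.map_of_adjunction (adj : F ⊣ G) (hG : PreservesCoproducts G) {X : C}
    (hX : IsCompactObj X) : IsCompactObj (F.obj X) := fun J => by
  have := hX J
  have := hG J
  exact preservesColimitsOfShape_of_natIso (preadditiveCoyonedaObjIso adj X).symm

end Adjunction

section Shift

variable {C : Type u₁} [Category.{v} C] [Preadditive C] [HasShift C ℤ]
  [∀ n : ℤ, (shiftFunctor C n).Additive]

/-- The natural isomorphism `Hom(X⟦-n⟧, -) ≅ Hom(X, -⟦n⟧)`. -/
noncomputable def preadditiveCoyonedaObjShiftIso (X : C) (n : ℤ) :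
    preadditiveCoyoneda.obj (op (X⟦-n⟧)) ≅
      shiftFunctor C n ⋙ preadditiveCoyoneda.obj (op X) :=
  have : (shiftEquiv C n).symm.functor.Additive :=
    inferInstanceAs (shiftFunctor C (-n)).Additive
  preadditiveCoyonedaObjIso (shiftEquiv C n).symm.toAdjunction X

lemma IsCompactObj.shift {X : C} (hX : IsCompactObj X) (n : ℤ) : IsCompactObj (X⟦n⟧) :=
  have : (shiftEquiv C n).functor.Additive := inferInstanceAs (shiftFunctor C n).Additive
  hX.map_of_adjunction (shiftEquiv C n).toAdjunction fun _ => inferInstance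

end Shift

section Compact

open scoped DirectSum

lemma IsCompactObj.preservesColimitsOfShape {C : Type u₁} [Category.{v} C] [Preadditive C] {X : C}
    (hX : IsCompactObj X) (J : Type*) [Small.{v} J] :
    PreservesColimitsOfShape (Discrete J) (preadditiveCoyoneda.obj (op X)) :=
  have := hX (Shrink.{v} J)
  preservesColimitsOfShape_of_equiv (Discrete.equivalence (equivShrink.{v} J).symm) _

variable {C : Type u₁} [Category.{v} C] [Preadditive C] {J : Type*} [DecidableEq J]

/-- The canonical homomorphism `⨁ Hom(X, Y j) → Hom(X, ∐ Y)`, an isomorphism when `X` is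
compact. -/
noncomputable def directSumToHom (X : C) (Y : J → C) [HasCoproduct Y] :
    (⨁ j, (X ⟶ Y j)) →+ (X ⟶ ∐ Y) :=
  DirectSum.toAddMonoid fun j => Preadditive.rightComp X (Sigma.ι Y j)

lemma directSumToHom_of (X : C) (Y : J → C) [HasCoproduct Y] (j : J) (k : X ⟶ Y j) :
    directSumToHom X Y (DirectSum.of (fun j => (X ⟶ Y j)) j k) = k ≫ Sigma.ι Y j :=
  DirectSum.toAddMonoid_of (fun j => Preadditive.rightComp X (Sigma.ι Y j)) j k

lemma directSumToHom_comp_π (X : C) (Y : J → C) [HasCoproduct Y] (φ : ⨁ j, (X ⟶ Y j)) (j : J) :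
    directSumToHom X Y φ ≫ Sigma.π Y j = φ j := by
  induction φ using DirectSum.induction_on with
  | zero => simp
  | of i k =>
    rw [directSumToHom_of, assoc]
    by_cases hij : i = j
    · subst hij
      simp
    · rw [Sigma.ι_π_of_ne _ hij, comp_zero, DirectSum.of_eq_of_ne _ _ _ (Ne.symm hij)]
  | add φ ψ hφ hψ => rw [map_add, Preadditive.add_comp, hφ, hψ, DirectSum.add_apply]

lemma directSumToHom_surjective (X : C) (Y : J → C) [HasCoproduct Y]
    [PreservesColimit (Discrete.functor Y) (preadditiveCoyoneda.obj (op X))] :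
    Function.Surjective (directSumToHom X Y) := by
  let R := (directSumToHom X Y).range
  have hR : AddCommGrpCat.ofHom (QuotientAddGroup.mk' R) = 0 :=
    (isColimitOfPreserves (preadditiveCoyoneda.obj (op X)) (coproductIsCoproduct Y)).hom_ext
      fun ⟨j⟩ => by
        ext k
        exact (QuotientAddGroup.eq_zero_iff _).2 ⟨_, directSumToHom_of X Y j k⟩
  exact fun h => (QuotientAddGroup.eq_zero_iff h).1 (congr($hR h))

lemma eq_zero_of_comp_sigma_π_eq_zero {X : C} {Y : J → C} [HasCoproduct Y]
    [PreservesColimit (Discrete.functor Y) (preadditiveCoyoneda.obj (op X))] {h : X ⟶ ∐ Y}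
    (hh : ∀ j, h ≫ Sigma.π Y j = 0) : h = 0 := by
  obtain ⟨φ, rfl⟩ := directSumToHom_surjective X Y h
  have hφ : φ = 0 := DFinsupp.ext fun j => by rw [← directSumToHom_comp_π, hh]; rfl
  rw [hφ, map_zero]

end Compact

section Generators

variable {C : Type u₁} [Category.{v} C] [HasZeroObject C] [HasShift C ℤ] [Preadditive C]
  [∀ n : ℤ, (shiftFunctor C n).Additive] [Pretriangulated C]

lemma isIso_of_isIso_preadditiveCoyoneda_map_shift {ι : Type*} {g : ι → C}
    (hg : ∀ Y : C, (∀ (i : ι) (n : ℤ) (f : g i ⟶ Y⟦n⟧), f = 0) → IsZero Y)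
    {A B : C} (f : A ⟶ B)
    (hf : ∀ i (n : ℤ), IsIso ((preadditiveCoyoneda.obj (op (g i))).map (f⟦n⟧'))) : IsIso f := by
  obtain ⟨Z, p, q, hZ⟩ := distinguished_cocone_triangle f
  refine (Triangle.isZero₃_iff_isIso₁ _ hZ).1 (hg Z fun i n k => ?_)
  have hker : (preadditiveCoyoneda.obj (op (g i))).homologicalKernel Z :=
    (ObjectProperty.trW_iff_of_distinguished _ _ hZ).1
      ((Functor.mem_homologicalKernel_trW_iff _ f).2 (hf i))
  exact (AddCommGrpCat.subsingleton_of_isZero (hker n)).elim k 0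

theorem CompactlyGenerated.exists_isDetecting (hC : CompactlyGenerated C) :
    ∃ (ι : Type v) (g : ι → C),
      (∀ i, IsCompactObj (g i)) ∧ (ObjectProperty.ofObj g).IsDetecting := by
  obtain ⟨-, ι, g, hgc, hg⟩ := hC
  refine ⟨ι × ULift.{v} ℤ, fun x => (g x.1)⟦x.2.down⟧, fun x => (hgc x.1).shift _,
    fun A B f hf => isIso_of_isIso_preadditiveCoyoneda_map_shift hg f fun i n => ?_⟩
  have : IsIso ((preadditiveCoyoneda.obj (op ((g i)⟦-n⟧))).map f) :=
    (ConcreteCategory.isIso_iff_bijective _).2 ((Function.bijective_iff_existsUnique _).2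
      (hf _ (ObjectProperty.ofObj_apply _ (i, ⟨-n⟩))))
  exact (NatIso.isIso_map_iff (preadditiveCoyonedaObjShiftIso (g i) n) f).1 this

lemma isIso_map_colimit_post {C D E J : Type*} [Category* C] [Category* D] [Category* E]
    [Category* J] (K : J ⥤ C) (G : C ⥤ D) (L : D ⥤ E) [HasColimit K]
    [HasColimit (K ⋙ G)] [PreservesColimit (K ⋙ G) L] [PreservesColimit K (G ⋙ L)] :
    IsIso (L.map (colimit.post K G)) := by
  have : HasColimit ((K ⋙ G) ⋙ L) := ⟨⟨_, isColimitOfPreserves L (colimit.isColimit (K ⋙ G))⟩⟩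
  have : HasColimit (K ⋙ G ⋙ L) := this
  have h := colimit.post_post K G L
  have : IsIso (colimit.post (K ⋙ G) L ≫ L.map (colimit.post K G)) := by
    rw [h]
    infer_instance
  exact IsIso.of_isIso_comp_left (colimit.post (K ⋙ G) L) _

theorem preservesCoproducts_of_isCompactObj_map (hC : CompactlyGenerated C) {D : Type u₂}
    [Category.{v} D] [Preadditive D] [HasCoproducts.{v} D] {F : C ⥤ D} [F.Additive] {G : D ⥤ C}
    (adj : F ⊣ G) (hF : ∀ X : C, IsCompactObj X → IsCompactObj (F.obj X)) :
    PreservesCoproducts G := by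
  refine fun J => ⟨fun {Y} => ?_⟩
  have : HasCoproducts.{v} C := hC.1
  obtain ⟨ι, g, hgc, hg⟩ := hC.exists_isDetecting
  have : IsIso (colimit.post Y G) := hg _ fun _ ⟨i⟩ => by
    have := hgc i J
    have := hF _ (hgc i) J
    have : PreservesColimitsOfShape (Discrete J) (G ⋙ preadditiveCoyoneda.obj (op (g i))) :=
      preservesColimitsOfShape_of_natIso (preadditiveCoyonedaObjIso adj (g i))
    have := isIso_map_colimit_post Y G (preadditiveCoyoneda.obj (op (g i)))
    exact (ConcreteCategory.bijective_of_isIso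
      ((preadditiveCoyoneda.obj (op (g i))).map (colimit.post Y G))).existsUnique
  exact preservesColimit_of_isIso_post G Y

end Generators

section OneSubShift

variable {C : Type u₁} [Category.{v} C] [Preadditive C] (X : ℕ ⥤ C) [HasCoproduct X.obj]

/-- The endomorphism `1 - shift` of `∐ Xₙ`, whose cone is the homotopy colimit of `X`. -/
noncomputable def oneSubShift : ∐ X.obj ⟶ ∐ X.obj :=
  Sigma.desc fun n => Sigma.ι X.obj n - X.map (homOfLE n.le_succ) ≫ Sigma.ι X.obj (n + 1)

lemma ι_oneSubShift (n : ℕ) : Sigma.ι X.obj n ≫ oneSubShift X =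
    Sigma.ι X.obj n - X.map (homOfLE n.le_succ) ≫ Sigma.ι X.obj (n + 1) :=
  Sigma.ι_desc _ n

lemma oneSubShift_comp_π_zero : oneSubShift X ≫ Sigma.π X.obj 0 = Sigma.π X.obj 0 :=
  Sigma.hom_ext _ _ fun n => by
    rw [reassoc_of% ι_oneSubShift X, Preadditive.sub_comp, assoc, Sigma.ι_π_of_ne _ n.succ_ne_zero,
      comp_zero, sub_zero]

lemma oneSubShift_comp_π_succ (n : ℕ) : oneSubShift X ≫ Sigma.π X.obj (n + 1) =
    Sigma.π X.obj (n + 1) - Sigma.π X.obj n ≫ X.map (homOfLE n.le_succ) :=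
  Sigma.hom_ext _ _ fun m => by
    rw [reassoc_of% ι_oneSubShift X, Preadditive.sub_comp, Preadditive.comp_sub, assoc]
    congr 1
    obtain rfl | hmn := eq_or_ne m n
    · simp
    · rw [Sigma.ι_π_of_ne _ (by simpa using hmn), Sigma.ι_π_of_ne_assoc _ hmn, comp_zero,
        zero_comp]

lemma mono_preadditiveCoyoneda_map_oneSubShift (c : C)
    [PreservesColimitsOfShape (Discrete ℕ) (preadditiveCoyoneda.obj (op c))] :
    Mono ((preadditiveCoyoneda.obj (op c)).map (oneSubShift X)) := by
  refine (AddCommGrpCat.mono_iff_injective _).2 ((injective_iff_map_eq_zero _).2 ?_)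
  intro (h : c ⟶ ∐ X.obj) (hh : h ≫ oneSubShift X = 0)
  refine eq_zero_of_comp_sigma_π_eq_zero fun n => ?_
  induction n with
  | zero => rw [← oneSubShift_comp_π_zero, reassoc_of% hh, zero_comp]
  | succ n ih =>
    have hsucc := h ≫= oneSubShift_comp_π_succ X n
    rw [reassoc_of% hh, zero_comp, Preadditive.comp_sub, reassoc_of% ih, zero_comp, sub_zero]
      at hsucc
    exact hsucc.symm

end OneSubShift

section HomotopyColimit

variable {C : Type u₁} [Category.{v} C] [HasZeroObject C] [HasShift C ℤ] [Preadditive C]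
  [∀ n : ℤ, (shiftFunctor C n).Additive] [Pretriangulated C]

/-- `p : ∐ Xₙ ⟶ Z` exhibits `Z` as a homotopy colimit of the sequence `X`, i.e. as a cone of
`1 - shift`. -/
def IsHomotopyColimit (X : ℕ ⥤ C) [HasCoproduct X.obj] {Z : C} (p : ∐ X.obj ⟶ Z) : Prop :=
  ∃ q : Z ⟶ (∐ X.obj)⟦(1 : ℤ)⟧, Triangle.mk (oneSubShift X) p q ∈ distTriang C

variable {X : ℕ ⥤ C} [HasCoproduct X.obj] {Z : C} {p : ∐ X.obj ⟶ Z}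

lemma IsHomotopyColimit.map_comp_ι_comp (hp : IsHomotopyColimit X p) {n m : ℕ} (h : n ≤ m) :
    X.map (homOfLE h) ≫ Sigma.ι X.obj m ≫ p = Sigma.ι X.obj n ≫ p := by
  obtain ⟨q, hZ⟩ := hp
  have hzero : oneSubShift X ≫ p = 0 := comp_distTriang_mor_zero₁₂ _ hZ
  induction m, h using Nat.le_induction with
  | base => exact (X.map_id n =≫ _).trans (id_comp _)
  | succ m h ih =>
    have hsucc := ι_oneSubShift X m =≫ p
    rw [assoc, hzero, comp_zero, Preadditive.sub_comp, assoc, eq_comm, sub_eq_zero] at hsucc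
    rw [← homOfLE_comp h m.le_succ, X.map_comp, assoc, ← hsucc, ih]

variable {c : C}

lemma IsHomotopyColimit.exists_comp_eq (hp : IsHomotopyColimit X p) (hc : IsCompactObj c)
    (f : c ⟶ Z) : ∃ h : c ⟶ ∐ X.obj, h ≫ p = f := by
  obtain ⟨q, hZ⟩ := hp
  have := (hc.shift (-1)).preservesColimitsOfShape ℕ
  have hmono : Mono ((preadditiveCoyoneda.obj (op c)).map ((oneSubShift X)⟦(1 : ℤ)⟧')) :=
    let e := preadditiveCoyonedaObjShiftIso c 1
    ((MorphismProperty.monomorphisms _).arrow_mk_iso_iff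
      (Arrow.isoMk (e.app _) (e.app _) (e.hom.naturality _).symm)).1
        (mono_preadditiveCoyoneda_map_oneSubShift X (c⟦(-1 : ℤ)⟧))
  have hq : q ≫ (oneSubShift X)⟦(1 : ℤ)⟧' = 0 := comp_distTriang_mor_zero₃₁ _ hZ
  have hfq : f ≫ q = 0 := (injective_iff_map_eq_zero _).1
    ((AddCommGrpCat.mono_iff_injective _).1 hmono) _
      ((assoc _ _ _).trans ((f ≫= hq).trans comp_zero))
  obtain ⟨h, hh⟩ := Triangle.coyoneda_exact₃ _ hZ f hfq
  exact ⟨h, hh.symm⟩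

lemma IsHomotopyColimit.exists_comp_ι_comp_eq (hp : IsHomotopyColimit X p) (hc : IsCompactObj c)
    (f : c ⟶ Z) : ∃ (n : ℕ) (k : c ⟶ X.obj n), k ≫ Sigma.ι X.obj n ≫ p = f := by
  obtain ⟨h, rfl⟩ := hp.exists_comp_eq hc f
  have := hc.preservesColimitsOfShape ℕ
  obtain ⟨φ, rfl⟩ := directSumToHom_surjective c X.obj h
  induction φ using DirectSum.induction_on with
  | zero => exact ⟨0, 0, by rw [map_zero, zero_comp, zero_comp]⟩
  | of n k => exact ⟨n, k, by rw [directSumToHom_of, assoc]⟩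
  | add φ ψ hφ hψ =>
    obtain ⟨n, k, hk⟩ := hφ
    obtain ⟨m, l, hl⟩ := hψ
    refine ⟨max n m, k ≫ X.map (homOfLE (le_max_left n m)) +
      l ≫ X.map (homOfLE (le_max_right n m)), ?_⟩
    rw [Preadditive.add_comp, assoc, assoc, hp.map_comp_ι_comp, hp.map_comp_ι_comp, hk, hl,
      map_add, Preadditive.add_comp]

end HomotopyColimit

section Cohomological

open scoped Pretriangulated.Opposite

lemma map_op_comp_apply {C : Type*} [Category* C] (H : Cᵒᵖ ⥤ AddCommGrpCat.{v}) {X Y Z : C}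
    (f : X ⟶ Y) (g : Y ⟶ Z) (z : H.obj (op Z)) :
    H.map (f ≫ g).op z = H.map f.op (H.map g.op z) :=
  congr($(H.map_comp g.op f.op) z)

lemma existsUnique_map_sigma_ι_op_eq {C : Type*} [Category* C] (H : Cᵒᵖ ⥤ AddCommGrpCat.{v})
    {J : Type*} [PreservesLimitsOfShape (Discrete J) H] (K : J → C) [HasCoproduct K]
    (y : ∀ j, H.obj (op (K j))) :
    ∃! x : H.obj (op (∐ K)), ∀ j, H.map (Sigma.ι K j).op x = y j := by
  obtain ⟨x, hx, hx'⟩ := (Types.isLimit_iff _).1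
    ⟨isLimitOfPreserves (H ⋙ forget AddCommGrpCat) (Cofan.IsColimit.op (coproductIsCoproduct K))⟩
    (fun j => y j.as) (by rintro ⟨i⟩ ⟨j⟩ ⟨⟨rfl : i = j⟩⟩; exact congr($(H.map_id _) (y i)))
  exact ⟨x, fun j => hx ⟨j⟩, fun x' h => hx' x' fun j => h j.as⟩

section Preadditive

variable {C : Type u₁} [Category.{v} C] [Preadditive C] (H : Cᵒᵖ ⥤ AddCommGrpCat.{v})
  [H.Additive] {X : C}

/-- The natural transformation `Hom(-, X) → H` which corresponds to `x ∈ H(X)` under the Yoneda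
lemma. -/
def yonedaAddHom (x : H.obj (op X)) (Y : C) : (Y ⟶ X) →+ H.obj (op Y) where
  toFun f := H.map f.op x
  map_zero' := by simp
  map_add' f g := by simp

lemma yonedaAddHom_apply (x : H.obj (op X)) {Y : C} (f : Y ⟶ X) :
    yonedaAddHom H x Y f = H.map f.op x := rfl

lemma comp_yonedaAddHom (x : H.obj (op X)) {Y Z : C} (f : Y ⟶ Z) (g : Z ⟶ X) :
    yonedaAddHom H x Y (f ≫ g) = H.map f.op (yonedaAddHom H x Z g) :=
  map_op_comp_apply H f g x

/-- `x ∈ H(X)` represents `H` on the objects `g i`. -/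
def RepresentsOn {ι : Type*} (g : ι → C) (x : H.obj (op X)) : Prop :=
  ∀ i, Function.Bijective (yonedaAddHom H x (g i))

variable {H}

lemma RepresentsOn.isIso {ι : Type*} {g : ι → C} (hg : (ObjectProperty.ofObj g).IsDetecting)
    {x : H.obj (op X)} (hx : RepresentsOn H g x) {X' : C} {x' : H.obj (op X')}
    (hx' : RepresentsOn H g x') (t : X ⟶ X') (ht : H.map t.op x' = x) : IsIso t := by
  refine hg t ?_
  rintro _ ⟨i⟩ h
  refine (existsUnique_congr fun h' => ?_).1 ((hx i).existsUnique (yonedaAddHom H x' (g i) h))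
  rw [← (hx' i).injective.eq_iff, yonedaAddHom_apply, ← ht, ← map_op_comp_apply]
  rfl

variable (H) in
lemma exists_amalgam [HasBinaryBiproducts C] (x : H.obj (op X)) {Z : C} (z : H.obj (op Z)) :
    ∃ (W : C) (a : X ⟶ W) (b : Z ⟶ W) (w : H.obj (op W)),
      H.map a.op w = x ∧ H.map b.op w = z :=
  ⟨X ⊞ Z, biprod.inl, biprod.inr, H.map biprod.fst.op x + H.map biprod.snd.op z, by
    simp [← map_op_comp_apply], by simp [← map_op_comp_apply]⟩

lemma exists_surjective_yonedaAddHom [HasBinaryBiproducts C] [HasCoproducts.{v} C]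
    [∀ J : Type v, PreservesLimitsOfShape (Discrete J) H] {ι : Type v} (g : ι → C)
    (x : H.obj (op X)) :
    ∃ (X' : C) (t : X ⟶ X') (x' : H.obj (op X')), H.map t.op x' = x ∧
      ∀ i, Function.Surjective (yonedaAddHom H x' (g i)) := by
  let K (j : Σ i, H.obj (op (g i))) := g j.1
  obtain ⟨z, hz, -⟩ := existsUnique_map_sigma_ι_op_eq H K fun j => j.2
  obtain ⟨X', t, b, x', ht, hb⟩ := exists_amalgam H x z
  refine ⟨X', t, x', ht, fun i y => ⟨Sigma.ι K ⟨i, y⟩ ≫ b, ?_⟩⟩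
  rw [comp_yonedaAddHom, yonedaAddHom_apply, hb, hz]

end Preadditive

variable {C : Type u₁} [Category.{v} C] [HasZeroObject C] [HasShift C ℤ] [Preadditive C]
  [∀ n : ℤ, (shiftFunctor C n).Additive] [Pretriangulated C] {H : Cᵒᵖ ⥤ AddCommGrpCat.{v}}
  [H.IsHomological]

lemma exists_map_op_eq_of_distTriang {A B D : C} {a : A ⟶ B} {b : B ⟶ D} {c : D ⟶ A⟦(1 : ℤ)⟧}
    (h : Triangle.mk a b c ∈ distTriang C) {x : H.obj (op B)} (hx : H.map a.op x = 0) :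
    ∃ y : H.obj (op D), H.map b.op y = x :=
  (ShortComplex.ab_exact_iff _).1 (H.map_distinguished_op_exact _ h) x hx

lemma exists_comp_eq_zero_of_map_op_eq_zero {X Y : C} (x : H.obj (op X)) (f : Y ⟶ X)
    (hf : H.map f.op x = 0) :
    ∃ (X' : C) (t : X ⟶ X') (x' : H.obj (op X')), H.map t.op x' = x ∧ f ≫ t = 0 := by
  obtain ⟨X', t, _, h⟩ := distinguished_cocone_triangle f
  obtain ⟨x', hx'⟩ := exists_map_op_eq_of_distTriang h hf
  exact ⟨X', t, x', hx', comp_distTriang_mor_zero₁₂ _ h⟩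

lemma exists_ker_yonedaAddHom_comp_eq_zero [HasCoproducts.{v} C]
    [∀ J : Type v, PreservesLimitsOfShape (Discrete J) H] {ι : Type v} (g : ι → C) {X : C}
    (x : H.obj (op X)) :
    ∃ (X' : C) (t : X ⟶ X') (x' : H.obj (op X')), H.map t.op x' = x ∧
      ∀ i, ∀ f ∈ (yonedaAddHom H x (g i)).ker, f ≫ t = 0 := by
  let K (j : Σ i, (yonedaAddHom H x (g i)).ker) := g j.1
  let e : ∐ K ⟶ X := Sigma.desc fun j => j.2.1
  have he : H.map e.op x = 0 :=
    (existsUnique_map_sigma_ι_op_eq H K 0).unique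
      (fun j => by rw [← map_op_comp_apply, Sigma.ι_desc]; exact j.2.2) (fun j => map_zero _)
  obtain ⟨X', t, x', hx', ht⟩ := exists_comp_eq_zero_of_map_op_eq_zero x e he
  refine ⟨X', t, x', hx', fun i f hf => ?_⟩
  have hι : Sigma.ι K ⟨i, f, hf⟩ ≫ e = f := Sigma.ι_desc _ _
  rw [← hι, assoc, ht, comp_zero]

lemma IsHomotopyColimit.exists_map_op_eq [PreservesLimitsOfShape (Discrete ℕ) H] {X : ℕ ⥤ C}
    [HasCoproduct X.obj] {Z : C} {p : ∐ X.obj ⟶ Z} (hp : IsHomotopyColimit X p)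
    (x : ∀ n, H.obj (op (X.obj n)))
    (hx : ∀ n, H.map (X.map (homOfLE n.le_succ)).op (x (n + 1)) = x n) :
    ∃ z : H.obj (op Z), ∀ n, H.map (Sigma.ι X.obj n ≫ p).op z = x n := by
  obtain ⟨q, hZ⟩ := hp
  obtain ⟨y, hy, -⟩ := existsUnique_map_sigma_ι_op_eq H X.obj x
  have hzero : H.map (oneSubShift X).op y = 0 :=
    (existsUnique_map_sigma_ι_op_eq H X.obj 0).unique
      (fun n => by
        rw [← map_op_comp_apply, ι_oneSubShift, ← yonedaAddHom_apply, map_sub, comp_yonedaAddHom,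
          yonedaAddHom_apply, yonedaAddHom_apply, hy, hy, hx, sub_self, Pi.zero_apply])
      (fun n => map_zero _)
  obtain ⟨z, rfl⟩ := exists_map_op_eq_of_distTriang hZ hzero
  exact ⟨z, fun n => by rw [map_op_comp_apply, hy]⟩

lemma exists_sequence_ker_yonedaAddHom_comp_eq_zero [HasCoproducts.{v} C]
    [∀ J : Type v, PreservesLimitsOfShape (Discrete J) H] {ι : Type v} (g : ι → C) {X₀ : C}
    (x₀ : H.obj (op X₀)) :
    ∃ (X : ℕ ⥤ C) (x : ∀ n, H.obj (op (X.obj n))) (t : X₀ ⟶ X.obj 0),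
      H.map t.op (x 0) = x₀ ∧
      (∀ n, H.map (X.map (homOfLE n.le_succ)).op (x (n + 1)) = x n) ∧
      ∀ n i, ∀ f ∈ (yonedaAddHom H (x n) (g i)).ker, f ≫ X.map (homOfLE n.le_succ) = 0 := by
  choose Y t y ht hker using fun x : Σ X : C, H.obj (op X) =>
    exists_ker_yonedaAddHom_comp_eq_zero g x.2
  let x (n : ℕ) : Σ X : C, H.obj (op X) := Nat.rec ⟨X₀, x₀⟩ (fun _ x => ⟨Y x, y x⟩) n
  let X : ℕ ⥤ C := Functor.ofSequence (X := fun n => (x n).1) fun n => t (x n)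
  have hX (n : ℕ) : X.map (homOfLE n.le_succ) = t (x n) :=
    Functor.ofSequence_map_homOfLE_succ _ n
  refine ⟨X, fun n => (x n).2, 𝟙 X₀, congr($(H.map_id _) x₀), fun n => ?_, fun n i f hf => ?_⟩
  · rw [hX]
    exact ht (x n)
  · rw [hX]
    exact hker (x n) i f hf

lemma IsHomotopyColimit.representsOn {X : ℕ ⥤ C} [HasCoproduct X.obj] {Z : C} {p : ∐ X.obj ⟶ Z}
    (hp : IsHomotopyColimit X p) {x : ∀ n, H.obj (op (X.obj n))} {z : H.obj (op Z)}
    (hz : ∀ n, H.map (Sigma.ι X.obj n ≫ p).op z = x n) {ι : Type*} {g : ι → C}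
    (hg : ∀ i, IsCompactObj (g i)) (hsurj : ∀ i, Function.Surjective (yonedaAddHom H (x 0) (g i)))
    (hker : ∀ n i, ∀ f ∈ (yonedaAddHom H (x n) (g i)).ker, f ≫ X.map (homOfLE n.le_succ) = 0) :
    RepresentsOn H g z := by
  have hcomp {n : ℕ} {c : C} (k : c ⟶ X.obj n) :
      yonedaAddHom H z c (k ≫ Sigma.ι X.obj n ≫ p) = yonedaAddHom H (x n) c k := by
    rw [comp_yonedaAddHom, yonedaAddHom_apply, hz, yonedaAddHom_apply]
  refine fun i => ⟨(injective_iff_map_eq_zero _).2 fun f hf => ?_, fun y => ?_⟩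
  · obtain ⟨n, k, rfl⟩ := hp.exists_comp_ι_comp_eq (hg i) f
    rw [← hp.map_comp_ι_comp n.le_succ, reassoc_of% hker n i k ((hcomp k).symm.trans hf), zero_comp]
  · obtain ⟨k, rfl⟩ := hsurj i y
    exact ⟨_, hcomp k⟩

lemma exists_representsOn [HasCoproducts.{v} C]
    [∀ J : Type v, PreservesLimitsOfShape (Discrete J) H] {ι : Type v} {g : ι → C}
    (hg : ∀ i, IsCompactObj (g i)) {X : C} (x : H.obj (op X)) :
    ∃ (Z : C) (t : X ⟶ Z) (z : H.obj (op Z)), H.map t.op z = x ∧ RepresentsOn H g z := by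
  obtain ⟨X₀, t₀, x₀, rfl, hsurj⟩ := exists_surjective_yonedaAddHom g x
  obtain ⟨X', x', t, rfl, hx', hker⟩ := exists_sequence_ker_yonedaAddHom_comp_eq_zero g x₀
  have : HasColimitsOfShape (Discrete ℕ) C :=
    hasColimitsOfShape_of_equivalence (Discrete.equivalence Equiv.ulift.{v})
  have : PreservesLimitsOfShape (Discrete ℕ) H :=
    preservesLimitsOfShape_of_equiv (Discrete.equivalence Equiv.ulift.{v}) H
  obtain ⟨Z, p, q, hZ⟩ := distinguished_cocone_triangle (oneSubShift X')
  have hp : IsHomotopyColimit X' p := ⟨q, hZ⟩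
  obtain ⟨z, hz⟩ := hp.exists_map_op_eq x' hx'
  refine ⟨Z, t₀ ≫ t ≫ Sigma.ι X'.obj 0 ≫ p, z, ?_, hp.representsOn hz hg (fun i y => ?_) hker⟩
  · rw [map_op_comp_apply, map_op_comp_apply, hz]
  · obtain ⟨k, rfl⟩ := hsurj i y
    exact ⟨k ≫ t, comp_yonedaAddHom H _ k t⟩

lemma RepresentsOn.exists_retraction [HasCoproducts.{v} C]
    [∀ J : Type v, PreservesLimitsOfShape (Discrete J) H] {ι : Type v} {g : ι → C}
    (hgc : ∀ i, IsCompactObj (g i)) (hg : (ObjectProperty.ofObj g).IsDetecting) {U : C}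
    {u : H.obj (op U)} (hu : RepresentsOn H g u) {W : C} (w : H.obj (op W)) (t : U ⟶ W)
    (ht : H.map t.op w = u) : ∃ r : W ⟶ U, t ≫ r = 𝟙 U ∧ H.map r.op u = w := by
  obtain ⟨U', s, u', hs, hu'⟩ := exists_representsOn hgc w
  have hts : H.map (t ≫ s).op u' = u := by rw [map_op_comp_apply, hs, ht]
  have := hu.isIso hg hu' (t ≫ s) hts
  refine ⟨s ≫ inv (t ≫ s), by rw [← assoc, IsIso.hom_inv_id], ?_⟩
  rw [← hts, ← map_op_comp_apply, assoc, IsIso.inv_hom_id, comp_id, hs]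

lemma RepresentsOn.bijective [HasCoproducts.{v} C]
    [∀ J : Type v, PreservesLimitsOfShape (Discrete J) H] {ι : Type v} {g : ι → C}
    (hgc : ∀ i, IsCompactObj (g i)) (hg : (ObjectProperty.ofObj g).IsDetecting) {U : C}
    {u : H.obj (op U)} (hu : RepresentsOn H g u) (Y : C) :
    Function.Bijective (yonedaAddHom H u Y) := by
  refine ⟨(injective_iff_map_eq_zero _).2 fun f hf => ?_, fun y => ?_⟩
  · obtain ⟨W, t, w, ht, hft⟩ := exists_comp_eq_zero_of_map_op_eq_zero u f hf
    obtain ⟨r, hr, -⟩ := hu.exists_retraction hgc hg w t ht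
    rw [← comp_id f, ← hr, reassoc_of% hft, zero_comp]
  · obtain ⟨W, t, b, w, ht, hb⟩ := exists_amalgam H u y
    obtain ⟨r, -, hr⟩ := hu.exists_retraction hgc hg w t ht
    exact ⟨b ≫ r, by rw [comp_yonedaAddHom, yonedaAddHom_apply, hr, hb]⟩

open scoped ZeroObject in
theorem CompactlyGenerated.brown_representability (hC : CompactlyGenerated C)
    (H : Cᵒᵖ ⥤ AddCommGrpCat.{v}) [H.IsHomological]
    [∀ J : Type v, PreservesLimitsOfShape (Discrete J) H] :
    (H ⋙ forget AddCommGrpCat).IsRepresentable := by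
  have : HasCoproducts.{v} C := hC.1
  obtain ⟨ι, g, hgc, hg⟩ := hC.exists_isDetecting
  obtain ⟨U, -, u, -, hu⟩ := exists_representsOn hgc (0 : H.obj (op (0 : C)))
  exact ⟨U, ⟨{
    homEquiv := Equiv.ofBijective _ (hu.bijective hgc hg _)
    homEquiv_comp := comp_yonedaAddHom H u }⟩⟩

theorem CompactlyGenerated.isLeftAdjoint (hC : CompactlyGenerated C) {D : Type u₂}
    [Category.{v} D] [Preadditive D] [HasZeroObject D] [HasShift D ℤ]
    [∀ n : ℤ, (shiftFunctor D n).Additive] [Pretriangulated D] (F : C ⥤ D) [F.CommShift ℤ]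
    [F.IsTriangulated] (hF : PreservesCoproducts F) : F.IsLeftAdjoint := by
  refine F.isLeftAdjoint_of_rightAdjointObjIsDefined_eq_top (eq_top_iff.2 fun Y _ => ?_)
  have (J : Type v) : PreservesLimitsOfShape (Discrete J) F.op :=
    have := hF J
    have : PreservesColimitsOfShape (Discrete J)ᵒᵖ F :=
      preservesColimitsOfShape_of_equiv (Discrete.opposite J).symm F
    preservesLimitsOfShape_op (Discrete J) F
  exact hC.brown_representability (F.op ⋙ preadditiveYoneda.obj Y)

end Cohomological

/-- for a triangle functor `F` between compactly generated triangulated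
categories with right adjoint `G`, the conditions "`G` preserves coproducts",
"`G` admits a right adjoint" and "`F` preserves compact objects" are equivalent. -/
theorem right_adjoint_preserves_coproducts_iff
    (hS : CompactlyGenerated S) (hT : CompactlyGenerated T)
    (F : S ⥤ T) [F.CommShift ℤ] [F.IsTriangulated]
    (G : T ⥤ S) (adj : F ⊣ G) :
    (PreservesCoproducts G ↔ G.IsLeftAdjoint) ∧
    (PreservesCoproducts G ↔ (∀ X : S, IsCompactObj X → IsCompactObj (F.obj X))) := by
  have : HasCoproducts.{v} T := hT.1
  let := adj.rightAdjointCommShift ℤ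
  have := adj.commShift_of_leftAdjoint ℤ
  have := adj.isTriangulated_rightAdjoint
  exact ⟨⟨hT.isLeftAdjoint G, fun _ _ => inferInstance⟩,
    fun hG _ => IsCompactObj.map_of_adjunction adj hG,
    preservesCoproducts_of_isCompactObj_map hS adj⟩

end LadderFormalization
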